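/- Let d ≥ 11 and let 𝐯 be a recurrent balanced sequence over an alphabet of d letters with critical exponent E(𝐯) = (d−1)/(d−2). Then every letter of 𝐯 has a well-defined frequency, and the maximum letter frequency ρ = max_a ρ_a(𝐯) satisfies 1/(d−1) < ρ < 1/(d−2). -/

import Mathlib

open Filter
open scoped ENNReal

namespace BalancedCE

variable {α : Type*} {β : Type*}

/-- The factor of `v` of length `n` starting at position `i`. -/
def factorAt (v : ℕ → α) (i n : ℕ) : List α := (List.range n).map fun k => v (i + k)

/-- `u` is a factor of the sequence `v`. -/
def IsFactor (v : ℕ → α) (u : List α) : Prop := ∃ i, factorAt v i u.length = u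

/-- The word `w` occurs in the sequence `v` at position `i`. -/
def OccursAt (v : ℕ → α) (w : List α) (i : ℕ) : Prop := factorAt v i w.length = w

/-- A sequence is balanced if counts of each letter in equal-length factors differ by at most 1. -/
def Balanced [DecidableEq α] (v : ℕ → α) : Prop :=
  ∀ (a : α) (u w : List α), IsFactor v u → IsFactor v w → u.length = w.length →
    |(u.count a : ℤ) - (w.count a : ℤ)| ≤ 1

def EventuallyPeriodic (v : ℕ → α) : Prop :=
  ∃ p, 0 < p ∧ ∃ N, ∀ n, N ≤ n → v (n + p) = v n

def Recurrent (v : ℕ → α) : Prop :=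
  ∀ u : List α, IsFactor v u → ∀ N : ℕ, ∃ i, N ≤ i ∧ OccursAt v u i

/-- `i < j` are consecutive occurrences of the letter `a` in `v`. -/
def ConsecOcc (v : ℕ → α) (a : α) (i j : ℕ) : Prop :=
  i < j ∧ v i = a ∧ v j = a ∧ ∀ k, i < k → k < j → v k ≠ a

/-- `p` is a period of the finite word `z` (i.e. `z` is a prefix of `u^ω` with `|u| = p`). -/
def IsPeriod (z : List α) (p : ℕ) : Prop :=
  0 < p ∧ ∀ i, i + p < z.length → z[i]? = z[i + p]?

/-- The minimal period of a finite word. -/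
noncomputable def minPeriod (z : List α) : ℕ := sInf {p | IsPeriod z p}

/-- The exponent of a finite word: its length divided by its minimal period. -/
noncomputable def expE (z : List α) : ℝ≥0∞ := (z.length : ℝ≥0∞) / (minPeriod z : ℝ≥0∞)

/-- The critical exponent of a sequence: the supremum of exponents of nonempty factors. -/
noncomputable def criticalExponent (v : ℕ → α) : ℝ≥0∞ :=
  ⨆ (z : List α) (_ : IsFactor v z ∧ z ≠ []), expE z

/-- A Pansiot sequence over a `d`-letter alphabet. -/
def Pansiot (d : ℕ) (v : ℕ → α) : Prop :=
  (∀ i : ℕ, (factorAt v i (d - 1)).Nodup) ∧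
  ∀ (a : α) (i j : ℕ), ConsecOcc v a i j → v (i + 1) ≠ v (j + 1)

/-- The letter `a` has frequency `ρ` in the sequence `v`. -/
def HasFreq [DecidableEq α] (v : ℕ → α) (a : α) (ρ : ℝ) : Prop :=
  Tendsto (fun n => ((factorAt v 0 n).count a : ℝ) / n) atTop (nhds ρ)

/-- Factor complexity of a sequence. -/
noncomputable def complexity (v : ℕ → α) (n : ℕ) : ℕ :=
  Set.ncard {u : List α | IsFactor v u ∧ u.length = n}

/-- Sturmian sequences: aperiodic binary sequences of factor complexity `n + 1`.
Convention: the letter `a` is `false`, the letter `b` is `true`. -/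
def Sturmian (u : ℕ → Bool) : Prop :=
  ¬ EventuallyPeriodic u ∧ ∀ n, complexity u n = n + 1

/-- Prepending a letter to a sequence. -/
def consSeq (c : α) (v : ℕ → α) : ℕ → α := fun n =>
  match n with
  | 0 => c
  | Nat.succ m => v m

/-- A standard sequence: a Sturmian sequence `u` such that `a·u` and `b·u` are Sturmian. -/
def IsStandard (u : ℕ → Bool) : Prop :=
  Sturmian u ∧ Sturmian (consSeq false u) ∧ Sturmian (consSeq true u)

/-- The slope of a binary sequence, with the convention `ρ_b > ρ_a` (`a = false`, `b = true`). -/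
def HasSlope (u : ℕ → Bool) (θ : ℝ) : Prop :=
  ∃ ρa ρb : ℝ, HasFreq u false ρa ∧ HasFreq u true ρb ∧ ρa < ρb ∧ θ = ρa / ρb

/-- `θ` has the (infinite) continued fraction expansion `[0; a 1, a 2, a 3, …]`:
there are complete quotients' fractional parts `t n ∈ (0,1)` with `t 0 = θ` and
`1 / t n = a (n+1) + t (n+1)` for all `n`. (The value `a 0` is irrelevant.) -/
def HasCF (θ : ℝ) (a : ℕ → ℕ) : Prop :=
  ∃ t : ℕ → ℝ, t 0 = θ ∧ ∀ n, 0 < t n ∧ t n < 1 ∧ 1 / t n = (a (n + 1) : ℝ) + t (n + 1)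

/-- Number of positions `< n` where `u` takes the value `c`. -/
def countBefore (u : ℕ → Bool) (c : Bool) (n : ℕ) : ℕ :=
  ((List.range n).filter fun i => u i = c).length

/-- The colouring of a binary sequence `u` by `y` (on the `a = false` positions)
and `y'` (on the `b = true` positions). -/
def colour (u : ℕ → Bool) (y : ℕ → α) (y' : ℕ → β) : ℕ → α ⊕ β := fun n =>
  if u n = false then Sum.inl (y (countBefore u false n))
  else Sum.inr (y' (countBefore u true n))

/-- A constant gap sequence: periodic, and consecutive occurrences of each occurring
letter are at a constant distance. -/
def ConstantGap (y : ℕ → α) : Prop :=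
  (∃ p, 0 < p ∧ ∀ n, y (n + p) = y n) ∧
  ∀ c : α, (∃ i, y i = c) → ∃ g, 0 < g ∧ ∀ i j, ConsecOcc y c i j → j - i = g

/-- The discolouration (projection) map: letters of the first alphabet go to `a = false`,
letters of the second alphabet go to `b = true`. -/
def proj : α ⊕ β → Bool := Sum.elim (fun _ => false) (fun _ => true)

/-- `v` is a return word to `w` in the sequence `z`. -/
def IsReturnWord (z : ℕ → α) (w v : List α) : Prop :=
  ∃ i j : ℕ, i < j ∧ OccursAt z w i ∧ OccursAt z w j ∧
    (∀ k, i < k → k < j → ¬ OccursAt z w k) ∧ v = factorAt z i (j - i)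

def RightSpecial (z : ℕ → α) (w : List α) : Prop :=
  ∃ a b : α, a ≠ b ∧ IsFactor z (w ++ [a]) ∧ IsFactor z (w ++ [b])

def LeftSpecial (z : ℕ → α) (w : List α) : Prop :=
  ∃ a b : α, a ≠ b ∧ IsFactor z (a :: w) ∧ IsFactor z (b :: w)

def Bispecial (z : ℕ → α) (w : List α) : Prop := LeftSpecial z w ∧ RightSpecial z w

/-- `o` enumerates, in increasing order, all occurrences of `w` in `z`. -/
def IsOccEnum (z : ℕ → α) (w : List α) (o : ℕ → ℕ) : Prop :=
  StrictMono o ∧ (∀ n, OccursAt z w (o n)) ∧ ∀ i, OccursAt z w i → ∃ n, o n = i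

/-- The derived sequence of `z` with respect to the occurrence enumeration `o` of a factor:
its `n`-th letter is the return word between the `n`-th and `(n+1)`-st occurrences. -/
def derivedSeq (z : ℕ → α) (o : ℕ → ℕ) : ℕ → List α :=
  fun n => factorAt z (o n) (o (n + 1) - o n)

/-- The slope of a sequence over a two-letter alphabet:
the ratio of the smaller letter frequency to the larger one. -/
def HasSlope2 {γ : Type*} [DecidableEq γ] (z : ℕ → γ) (θ : ℝ) : Prop :=
  ∃ (c c' : γ) (ρ ρ' : ℝ), c ≠ c' ∧ (∀ n, z n = c ∨ z n = c') ∧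
    HasFreq z c ρ ∧ HasFreq z c' ρ' ∧ ρ < ρ' ∧ θ = ρ / ρ'

/-- The purely cyclic constant gap sequence `(0 1 ⋯ (δ-1))^ω` over `ZMod δ`. -/
def cyc (δ : ℕ) : ℕ → ZMod δ := fun n => (n : ZMod δ)

/-- The colouring `colour(u, (1 2 ⋯ δ)^ω, (1' 2' ⋯ δ')^ω)` over `2δ` letters. -/
def colourCyc (δ : ℕ) (u : ℕ → Bool) : ℕ → ZMod δ ⊕ ZMod δ := colour u (cyc δ) (cyc δ)


section Helpers

variable [DecidableEq α]

/-- Number of occurrences of `a` in the window of length `n` starting at `i`. -/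
def cnt (v : ℕ → α) (a : α) (i n : ℕ) : ℕ := (factorAt v i n).count a

lemma factorAt_length (v : ℕ → α) (i n : ℕ) : (factorAt v i n).length = n := by
  simp [factorAt]

lemma isFactor_factorAt (v : ℕ → α) (i n : ℕ) : IsFactor v (factorAt v i n) :=
  ⟨i, by rw [factorAt_length]⟩

lemma cnt_zero (v : ℕ → α) (a : α) (i : ℕ) : cnt v a i 0 = 0 := by
  simp [cnt, factorAt]

lemma cnt_succ (v : ℕ → α) (a : α) (i n : ℕ) :
    cnt v a i (n + 1) = cnt v a i n + if v (i + n) = a then 1 else 0 := by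
  simp [cnt, factorAt, List.range_succ, List.count_append, List.count_singleton]

lemma cnt_add (v : ℕ → α) (a : α) (i m n : ℕ) :
    cnt v a i (m + n) = cnt v a i m + cnt v a (i + m) n := by
  induction n with
  | zero => simp [cnt_zero]
  | succ n ih => rw [← add_assoc, cnt_succ, cnt_succ, ih, add_assoc i m n]; omega

lemma cnt_one (v : ℕ → α) (a : α) (i : ℕ) :
    cnt v a i 1 = if v i = a then 1 else 0 := by
  have := cnt_succ v a i 0
  simpa [cnt_zero] using this

lemma cnt_congr {v : ℕ → α} {i j n : ℕ} (h : ∀ k < n, v (j + k) = v (i + k)) (a : α) :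
    cnt v a j n = cnt v a i n := by
  induction n with
  | zero => simp [cnt_zero]
  | succ n ih =>
    rw [cnt_succ, cnt_succ, ih (fun k hk => h k (by omega)), h n (by omega)]

lemma cnt_eq_zero {v : ℕ → α} {a : α} {i n : ℕ} (h : ∀ k < n, v (i + k) ≠ a) :
    cnt v a i n = 0 := by
  induction n with
  | zero => simp [cnt_zero]
  | succ n ih =>
    rw [cnt_succ, ih (fun k hk => h k (by omega)), if_neg (h n (by omega))]

lemma cnt_pos {v : ℕ → α} {a : α} {i n : ℕ} (h : 0 < cnt v a i n) :
    ∃ k < n, v (i + k) = a := by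
  by_contra hc
  push Not at hc
  rw [cnt_eq_zero hc] at h
  omega

/-- A window containing at least two occurrences contains two distinct positions. -/
lemma cnt_two {v : ℕ → α} {a : α} {i n : ℕ} (h : 2 ≤ cnt v a i n) :
    ∃ x y, x < y ∧ y < n ∧ v (i + x) = a ∧ v (i + y) = a := by
  induction n with
  | zero => simp [cnt_zero] at h
  | succ n ih =>
    rw [cnt_succ] at h
    split_ifs at h with h1
    · obtain ⟨k, hk, hk'⟩ := cnt_pos (v := v) (a := a) (i := i) (n := n) (by omega)
      exact ⟨k, n, hk, by omega, hk', h1⟩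
    · obtain ⟨x, y, hxy, hy, h2, h3⟩ := ih (by omega)
      exact ⟨x, y, hxy, by omega, h2, h3⟩

lemma two_le_cnt {v : ℕ → α} {a : α} {i p : ℕ} (hp : 0 < p) (h1 : v i = a)
    (h2 : v (i + p) = a) : 2 ≤ cnt v a i (p + 1) := by
  rw [cnt_succ, if_pos h2]
  obtain ⟨q, rfl⟩ : ∃ q, p = 1 + q := ⟨p - 1, by omega⟩
  rw [cnt_add, cnt_one, if_pos h1]
  omega

lemma bal_cnt {v : ℕ → α} (hbal : Balanced v) (a : α) (i j n : ℕ) :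
    cnt v a i n ≤ cnt v a j n + 1 := by
  have h := hbal a _ _ (isFactor_factorAt v i n) (isFactor_factorAt v j n)
    (by rw [factorAt_length, factorAt_length])
  have := (abs_le.1 h).2
  unfold cnt
  omega

lemma rec_window {v : ℕ → α} (hrec : Recurrent v) (i n N : ℕ) :
    ∃ j, N ≤ j ∧ ∀ k < n, v (j + k) = v (i + k) := by
  obtain ⟨j, hj, h⟩ := hrec _ (isFactor_factorAt v i n) N
  refine ⟨j, hj, fun k hk => ?_⟩
  unfold OccursAt at h
  rw [factorAt_length] at h
  have h2 := congrArg (fun l => l[k]?) h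
  simpa [factorAt, hk] using h2

/-- Existence of frequencies in balanced sequences. -/
lemma exists_freq {v : ℕ → α} (hbal : Balanced v) (a : α) : ∃ ρ : ℝ, HasFreq v a ρ := by
  have hsub : Subadditive (fun n => (cnt v a 0 n : ℝ) + 1) := by
    intro m n
    have h1 := cnt_add v a 0 m n
    have h2 := bal_cnt hbal a (0 + m) 0 n
    have h3 : cnt v a 0 (m + n) ≤ cnt v a 0 m + cnt v a 0 n + 1 := by omega
    have h4 : (cnt v a 0 (m + n) : ℝ) ≤ cnt v a 0 m + cnt v a 0 n + 1 := by exact_mod_cast h3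
    linarith
  have hb : BddBelow (Set.range fun n => ((cnt v a 0 n : ℝ) + 1) / n) := by
    refine ⟨0, ?_⟩
    rintro _ ⟨n, rfl⟩
    positivity
  have ht := hsub.tendsto_lim hb
  have h0 : Tendsto (fun n : ℕ => (1 : ℝ) / n) atTop (nhds 0) := tendsto_one_div_atTop_nhds_zero_nat
  refine ⟨hsub.lim, ?_⟩
  have := ht.sub h0
  rw [sub_zero] at this
  refine this.congr fun n => ?_
  simp only [cnt]
  ring

lemma cnt_mul_le {v : ℕ → α} {a : α} {L M : ℕ} (h : ∀ i, cnt v a i L ≤ M) (i J : ℕ) :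
    cnt v a i (J * L) ≤ J * M := by
  induction J with
  | zero => simp [cnt_zero]
  | succ J ih =>
    rw [Nat.succ_mul J L, cnt_add, Nat.succ_mul]
    exact Nat.add_le_add ih (h _)

lemma le_cnt_mul {v : ℕ → α} {a : α} {L M : ℕ} (h : ∀ i, M ≤ cnt v a i L) (i J : ℕ) :
    J * M ≤ cnt v a i (J * L) := by
  induction J with
  | zero => simp
  | succ J ih =>
    rw [Nat.succ_mul J L, cnt_add, Nat.succ_mul]
    exact Nat.add_le_add ih (h _)

lemma freq_sub {v : ℕ → α} {a : α} {ρ : ℝ} (hρ : HasFreq v a ρ) {L : ℕ} (hL : 0 < L) :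
    Tendsto (fun J : ℕ => (cnt v a 0 (J * L) : ℝ) / ((J * L : ℕ) : ℝ)) atTop (nhds ρ) := by
  have h1 : Tendsto (fun J : ℕ => J * L) atTop atTop :=
    tendsto_id.atTop_mul_const' hL
  exact hρ.comp h1

lemma freq_le {v : ℕ → α} {a : α} {ρ : ℝ} (hρ : HasFreq v a ρ) {L M : ℕ}
    (h : ∀ i, cnt v a i L ≤ M) : L * ρ ≤ M := by
  rcases Nat.eq_zero_or_pos L with rfl | hL
  · simp
  have hL' : (0 : ℝ) < L := by exact_mod_cast hL
  have : ρ ≤ (M : ℝ) / L := by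
    refine le_of_tendsto (freq_sub hρ hL) ?_
    filter_upwards [eventually_gt_atTop 0] with J hJ
    have hJ' : (0 : ℝ) < J := by exact_mod_cast hJ
    have := cnt_mul_le h 0 J
    have h2 : (cnt v a 0 (J * L) : ℝ) ≤ J * M := by exact_mod_cast this
    rw [div_le_div_iff₀ (by push_cast; positivity) hL']
    push_cast
    nlinarith
  rw [le_div_iff₀ hL'] at this
  linarith

lemma le_freq {v : ℕ → α} {a : α} {ρ : ℝ} (hρ : HasFreq v a ρ) {L M : ℕ}
    (h : ∀ i, M ≤ cnt v a i L) : (M : ℝ) ≤ L * ρ := by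
  rcases Nat.eq_zero_or_pos L with rfl | hL
  · have := h 0
    rw [cnt_zero] at this
    have : M = 0 := by omega
    simp [this]
  have hL' : (0 : ℝ) < L := by exact_mod_cast hL
  have : (M : ℝ) / L ≤ ρ := by
    refine ge_of_tendsto (freq_sub hρ hL) ?_
    filter_upwards [eventually_gt_atTop 0] with J hJ
    have hJ' : (0 : ℝ) < J := by exact_mod_cast hJ
    have := le_cnt_mul h 0 J
    have h2 : (J : ℝ) * M ≤ cnt v a 0 (J * L) := by exact_mod_cast this
    rw [div_le_div_iff₀ hL' (by push_cast; positivity)]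
    push_cast
    nlinarith
  rw [div_le_iff₀ hL'] at this
  linarith

lemma dev_le {v : ℕ → α} (hbal : Balanced v) {a : α} {ρ : ℝ} (hρ : HasFreq v a ρ) (i n : ℕ) :
    (cnt v a i n : ℝ) ≤ n * ρ + 1 := by
  have h : ∀ j, cnt v a i n - 1 ≤ cnt v a j n := fun j => by
    have := bal_cnt hbal a i j n
    omega
  have h1 := le_freq hρ h
  have h2 : (cnt v a i n : ℝ) ≤ ((cnt v a i n - 1 : ℕ) : ℝ) + 1 := by
    have : cnt v a i n ≤ (cnt v a i n - 1) + 1 := by omega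
    exact_mod_cast this
  linarith

lemma le_dev {v : ℕ → α} (hbal : Balanced v) {a : α} {ρ : ℝ} (hρ : HasFreq v a ρ) (i n : ℕ) :
    n * ρ ≤ (cnt v a i n : ℝ) + 1 := by
  have h : ∀ j, cnt v a j n ≤ cnt v a i n + 1 := fun j => bal_cnt hbal a j i n
  have h1 := freq_le hρ h
  push_cast at h1
  linarith

/-- Rational frequency: the number of occurrences in windows of length `Q` is constant. -/
lemma cnt_const {v : ℕ → α} (hrec : Recurrent v) (hbal : Balanced v) {a : α} {ρ : ℝ}
    (hρ : HasFreq v a ρ) {P Q : ℕ} (hPQ : Q * ρ = P) (i : ℕ) :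
    cnt v a i Q = P := by
  apply le_antisymm
  · by_contra hc
    push Not at hc
    obtain ⟨j, hj, hw⟩ := rec_window hrec i Q (i + Q)
    have hjc := cnt_congr hw a
    obtain ⟨l, rfl⟩ : ∃ l, j = i + Q + l := ⟨j - (i + Q), by omega⟩
    have h1 := cnt_add v a i (Q + l) Q
    rw [cnt_add v a i Q l, ← add_assoc i Q l, hjc] at h1
    have h2 := dev_le hbal hρ i (Q + l + Q)
    rw [h1] at h2
    push_cast at h2
    have hc' : (P : ℝ) + 1 ≤ cnt v a i Q := by exact_mod_cast hc
    set x := cnt v a (i + Q) l with hx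
    have h3 : (x : ℝ) + 1 ≤ l * ρ := by nlinarith
    have h4 : ∀ k, cnt v a k l ≤ x + 1 := fun k => bal_cnt hbal a k (i + Q) l
    have h5 := cnt_mul_le h4 i Q
    have h6 : ∀ k, P ≤ cnt v a k Q := fun k => by
      have := bal_cnt hbal a i k Q
      omega
    have hl : l ≠ 0 := by
      rintro rfl
      have : (0 : ℝ) ≤ x := Nat.cast_nonneg _
      push_cast at h3
      linarith
    obtain ⟨t, rfl⟩ := Nat.exists_eq_succ_of_ne_zero hl
    have h7 := le_cnt_mul h6 (i + Q) t
    have h8 : cnt v a i (Q * (t + 1)) = cnt v a i Q + cnt v a (i + Q) (t * Q) := by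
      rw [← cnt_add]; congr 1; ring
    have h9 : P + 1 + t * P ≤ Q * (x + 1) := by
      have : Q * (t + 1) = Q * Nat.succ t := rfl
      rw [← this, h8] at h5
      omega
    have h10 : (P : ℝ) + 1 + t * P ≤ Q * (x + 1) := by exact_mod_cast h9
    push_cast at h3
    have hQ : (0 : ℝ) ≤ Q := Nat.cast_nonneg _
    nlinarith [mul_le_mul_of_nonneg_left h3 hQ]
  · by_contra hc
    push Not at hc
    obtain ⟨j, hj, hw⟩ := rec_window hrec i Q (i + Q)
    have hjc := cnt_congr hw a
    obtain ⟨l, rfl⟩ : ∃ l, j = i + Q + l := ⟨j - (i + Q), by omega⟩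
    have h1 := cnt_add v a i (Q + l) Q
    rw [cnt_add v a i Q l, ← add_assoc i Q l, hjc] at h1
    have h2 := le_dev hbal hρ i (Q + l + Q)
    rw [h1] at h2
    push_cast at h2
    have hc' : (cnt v a i Q : ℝ) + 1 ≤ P := by exact_mod_cast hc
    set x := cnt v a (i + Q) l with hx
    have h3 : l * ρ + 1 ≤ (x : ℝ) := by nlinarith
    have h4 : ∀ k, x - 1 ≤ cnt v a k l := fun k => by
      have := bal_cnt hbal a (i + Q) k l
      omega
    have h5 := le_cnt_mul h4 i Q
    have h6 : ∀ k, cnt v a k Q ≤ P := fun k => by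
      have := bal_cnt hbal a k i Q
      omega
    have hl : l ≠ 0 := by
      rintro rfl
      have : x = 0 := by rw [hx, cnt_zero]
      rw [this] at h3
      push_cast at h3
      linarith
    obtain ⟨t, rfl⟩ := Nat.exists_eq_succ_of_ne_zero hl
    have h7 := cnt_mul_le h6 (i + Q) t
    have h8 : cnt v a i (Q * (t + 1)) = cnt v a i Q + cnt v a (i + Q) (t * Q) := by
      rw [← cnt_add]; congr 1; ring
    have h9 : Q * (x - 1) + 1 ≤ P + t * P := by
      have : Q * (t + 1) = Q * Nat.succ t := rfl
      rw [← this, h8] at h5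
      omega
    have h10 : (Q : ℝ) * ((x - 1 : ℕ) : ℝ) + 1 ≤ P + t * P := by exact_mod_cast h9
    have h11 : (x : ℝ) ≤ ((x - 1 : ℕ) : ℝ) + 1 := by
      have : x ≤ (x - 1) + 1 := by omega
      exact_mod_cast this
    push_cast at h3
    have hQ : (0 : ℝ) ≤ Q := Nat.cast_nonneg _
    have h12 : ((t : ℝ) + 1) * ρ ≤ ((x - 1 : ℕ) : ℝ) := by linarith
    nlinarith [mul_le_mul_of_nonneg_left h12 hQ]

lemma freq_nonneg {v : ℕ → α} {a : α} {ρ : ℝ} (hρ : HasFreq v a ρ) : 0 ≤ ρ := by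
  have := le_freq hρ (L := 1) (M := 0) (fun _ => Nat.zero_le _)
  simpa using this

/-- A nonnegative rational frequency gives a period of the letter. -/
lemma letter_periodic {v : ℕ → α} (hrec : Recurrent v) (hbal : Balanced v) {a : α} {ρ : ℝ}
    (hρ : HasFreq v a ρ) (hrat : ¬ Irrational ρ) :
    ∃ Q : ℕ, 0 < Q ∧ ∀ n, v (n + Q) = a ↔ v n = a := by
  unfold Irrational at hrat
  push Not at hrat
  obtain ⟨q, hq⟩ := hrat
  have h0 := freq_nonneg hρ
  have hq0 : 0 ≤ q := by rw [← hq] at h0; exact_mod_cast h0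
  have hPQ : ((q.den : ℕ) : ℝ) * ρ = (q.num.toNat : ℕ) := by
    rw [← hq]
    have h1 : (q.den : ℚ) * q = q.num := Rat.den_mul_eq_num q
    have h2 : ((q.num.toNat : ℕ) : ℤ) = q.num := Int.toNat_of_nonneg (Rat.num_nonneg.2 hq0)
    have h3 : ((q.num.toNat : ℕ) : ℚ) = (q.num : ℚ) := by exact_mod_cast congrArg (Int.cast : ℤ → ℚ) h2
    have h4 : (q.den : ℚ) * q = (q.num.toNat : ℕ) := by rw [h3, h1]
    exact_mod_cast h4
  refine ⟨q.den, q.pos, fun n => ?_⟩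
  have h1 := cnt_const hrec hbal hρ hPQ n
  have h2 := cnt_const hrec hbal hρ hPQ (n + 1)
  have h3 := cnt_add v a n 1 q.den
  have h4 := cnt_succ v a n q.den
  rw [cnt_one] at h3
  rw [add_comm 1 q.den] at h3
  split_ifs at h3 h4 <;> first | (constructor <;> intro <;> assumption) | omega | tauto

/-- If `a` occupies an arithmetic progression, every other letter has rational frequency. -/
lemma not_irrational {v : ℕ → α} (hbal : Balanced v) {a b : α} (hab : a ≠ b)
    {ρ : ℝ} (hρ : HasFreq v b ρ) {r Q : ℕ} (hQ : 0 < Q) (hr : ∀ j, v (r + j * Q) = a) :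
    ¬ Irrational ρ := by
  intro hirr
  have hρ0 : 0 < ρ := lt_of_le_of_ne (freq_nonneg hρ) (fun h => hirr ⟨0, by simp [← h]⟩)
  have hα : Irrational ((Q : ℝ) * ρ) := hirr.natCast_mul (by omega)
  -- the deviation along the progression
  have key : ∀ j l : ℕ, |(cnt v b (r + j * Q) (l * Q) : ℝ) - (l * Q : ℕ) * ρ| ≤ 1 - ρ := by
    intro j l
    rcases Nat.eq_zero_or_pos l with rfl | hl
    · have h1 := le_dev hbal hρ (r + j * Q) 1
      rw [cnt_one, if_neg (by rw [hr]; exact hab)] at h1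
      simp only [Nat.zero_mul, cnt_zero]
      push_cast at h1 ⊢
      simp
      linarith
    · have hn : ∀ k, v (r + k * Q) ≠ b := fun k => by rw [hr]; exact hab
      have e1 : cnt v b (r + j * Q) (l * Q + 1) = cnt v b (r + j * Q) (l * Q) := by
        rw [cnt_succ, if_neg]
        · rfl
        · have := hn (j + l)
          rwa [add_mul, ← add_assoc] at this
      have h1 := le_dev hbal hρ (r + j * Q) (l * Q + 1)
      have hpos : 0 < l * Q := Nat.mul_pos hl hQ
      obtain ⟨s, hs⟩ : ∃ s, l * Q = 1 + s := ⟨l * Q - 1, by omega⟩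
      have e2 : cnt v b (r + j * Q) (l * Q) = cnt v b (r + j * Q + 1) s := by
        rw [hs, cnt_add, cnt_one, if_neg (hn j), zero_add]
      have h2 := dev_le hbal hρ (r + j * Q + 1) s
      rw [← e2] at h2
      rw [e1] at h1
      have hs' : ((l * Q : ℕ) : ℝ) = 1 + s := by exact_mod_cast hs
      push_cast at h1 hs' ⊢
      rw [abs_le]
      constructor <;> nlinarith
  obtain ⟨n, hn⟩ := exists_nat_gt (1 / ρ)
  have hnpos : 0 < n := by
    have : (0 : ℝ) < n := lt_trans (by positivity) hn
    exact_mod_cast this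
  obtain ⟨k, hk0, hkn, hk⟩ := Real.exists_nat_abs_mul_sub_round_le ((Q : ℝ) * ρ) hnpos
  set p := round ((k : ℝ) * (Q * ρ)) with hp
  set δ : ℝ := (k : ℝ) * (Q * ρ) - p with hδ
  have hδlt : |δ| < ρ := by
    refine lt_of_le_of_lt hk ?_
    rw [div_lt_iff₀ (by positivity)]
    rw [div_lt_iff₀ hρ0] at hn
    nlinarith
  have hδ0 : δ ≠ 0 := by
    intro h
    have h1 : Irrational ((k : ℝ) * (Q * ρ)) := hα.natCast_mul (by omega)
    exact h1.ne_int p (by linarith)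
  have hstep : ∀ j, (cnt v b (r + j * Q) (k * Q) : ℝ) = p := by
    intro j
    have h1 := key j k
    push_cast at h1
    have h2 : |((cnt v b (r + j * Q) (k * Q) : ℝ) - p)| < 1 := by
      have e : (cnt v b (r + j * Q) (k * Q) : ℝ) - p
          = ((cnt v b (r + j * Q) (k * Q) : ℝ) - k * Q * ρ) + δ := by rw [hδ]; ring
      rw [e]
      have := abs_add_le ((cnt v b (r + j * Q) (k * Q) : ℝ) - k * Q * ρ) δ
      linarith
    have h3 : |((cnt v b (r + j * Q) (k * Q) : ℤ) - p)| < 1 := by exact_mod_cast h2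
    rw [Int.abs_lt_one_iff] at h3
    have h4 : (cnt v b (r + j * Q) (k * Q) : ℤ) = p := by omega
    exact_mod_cast h4
  have hsum : ∀ t : ℕ, (cnt v b r (t * k * Q) : ℝ) = t * p := by
    intro t
    induction t with
    | zero => simp [cnt_zero]
    | succ t ih =>
      have e : (t + 1) * k * Q = t * k * Q + k * Q := by ring
      rw [e, cnt_add]
      push_cast
      rw [ih, hstep (t * k)]
      ring
  obtain ⟨t, ht⟩ := exists_nat_gt (1 / |δ|)
  have hδp : 0 < |δ| := abs_pos.2 hδ0
  rw [div_lt_iff₀ hδp] at ht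
  have h1 := key 0 (t * k)
  simp only [Nat.zero_mul, add_zero] at h1
  rw [hsum] at h1
  have e : (t : ℝ) * p - ((t * k * Q : ℕ) : ℝ) * ρ = -(t * δ) := by
    rw [hδ]; push_cast; ring
  rw [e, abs_neg, abs_mul, Nat.abs_cast] at h1
  linarith

/-- Repetitions are bounded by the critical exponent. -/
lemma rep_bound {v : ℕ → α} {d : ℕ} (hd : 11 ≤ d)
    (hE : criticalExponent v = ((d - 1 : ℕ) : ℝ≥0∞) / ((d - 2 : ℕ) : ℝ≥0∞))
    {i p m : ℕ} (hp : 0 < p) (h : ∀ k < m, v (i + k + p) = v (i + k)) :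
    m * (d - 2) ≤ p := by
  have hper : IsPeriod (factorAt v i (p + m)) p := by
    refine ⟨hp, fun k hk => ?_⟩
    rw [factorAt_length] at hk
    have h1 : k < p + m := by omega
    simp only [factorAt, List.getElem?_map, List.getElem?_range h1, List.getElem?_range hk,
      Option.map_some]
    rw [← add_assoc, h k (by omega)]
  have hmin : minPeriod (factorAt v i (p + m)) ≤ p := Nat.sInf_le hper
  have hne : factorAt v i (p + m) ≠ [] := by
    intro h0
    have := factorAt_length v i (p + m)
    rw [h0] at this
    simp at this
    omega
  have h1 : expE (factorAt v i (p + m)) ≤ criticalExponent v :=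
    le_iSup₂_of_le (factorAt v i (p + m)) ⟨isFactor_factorAt v i _, hne⟩ le_rfl
  have h2 : ((p + m : ℕ) : ℝ≥0∞) / (p : ℝ≥0∞) ≤ expE (factorAt v i (p + m)) := by
    unfold expE
    rw [factorAt_length]
    gcongr
  rw [hE] at h1
  have h3 := h2.trans h1
  have hp0 : (p : ℝ≥0∞) ≠ 0 := by exact_mod_cast hp.ne'
  have hd0 : ((d - 2 : ℕ) : ℝ≥0∞) ≠ 0 := by
    have : d - 2 ≠ 0 := by omega
    exact_mod_cast this
  rw [ENNReal.div_le_iff hp0 (by simp), ← ENNReal.mul_div_right_comm,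
    ENNReal.le_div_iff_mul_le (Or.inl hd0) (Or.inl (by simp))] at h3
  have h4 : (p + m) * (d - 2) ≤ (d - 1) * p := by exact_mod_cast h3
  obtain ⟨e, rfl⟩ : ∃ e, d = e + 2 := ⟨d - 2, by omega⟩
  simp only [Nat.add_sub_cancel] at h4 ⊢
  have : e + 2 - 1 = e + 1 := by omega
  rw [this] at h4
  nlinarith

/-- A purely periodic sequence is impossible. -/
lemma irrational_of_occurs [Fintype α] {v : ℕ → α} {d : ℕ} (hd : 11 ≤ d)
    (hrec : Recurrent v) (hbal : Balanced v)
    (hE : criticalExponent v = ((d - 1 : ℕ) : ℝ≥0∞) / ((d - 2 : ℕ) : ℝ≥0∞))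
    {ρ : α → ℝ} (hρ : ∀ a, HasFreq v a (ρ a)) (r : ℕ) : Irrational (ρ (v r)) := by
  by_contra hrat
  obtain ⟨Q, hQ, hper⟩ := letter_periodic hrec hbal (hρ (v r)) hrat
  have hAP : ∀ j, v (r + j * Q) = v r := by
    intro j
    induction j with
    | zero => simp
    | succ j ih =>
      have : r + (j + 1) * Q = r + j * Q + Q := by ring
      rw [this]
      exact (hper _).2 ih
  have hall : ∀ b, ∃ Q : ℕ, 0 < Q ∧ ∀ n, v (n + Q) = b ↔ v n = b := by
    intro b
    refine letter_periodic hrec hbal (hρ b) ?_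
    by_cases hb : v r = b
    · rw [← hb]; exact hrat
    · exact not_irrational hbal hb (hρ b) hQ hAP
  choose q hq0 hq using hall
  have hmul : ∀ b k n, v (n + k * q b) = b ↔ v n = b := by
    intro b k
    induction k with
    | zero => simp
    | succ k ih =>
      intro n
      have : n + (k + 1) * q b = n + k * q b + q b := by ring
      rw [this, hq, ih]
  have hp : 0 < ∏ b, q b := Finset.prod_pos fun b _ => hq0 b
  have hv : ∀ n, v (n + ∏ b, q b) = v n := by
    intro n
    obtain ⟨k, hk⟩ := Finset.dvd_prod_of_mem q (Finset.mem_univ (v n))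
    rw [hk, mul_comm]
    exact (hmul (v n) k n).2 rfl
  have := rep_bound hd hE (i := 0) (m := ∏ b, q b) hp (fun k _ => hv _)
  have h9 : 9 ≤ d - 2 := by omega
  nlinarith

/-- No letter occupies a full arithmetic progression. -/
lemma no_AP [Fintype α] {v : ℕ → α} {d : ℕ} (hd : 11 ≤ d)
    (hrec : Recurrent v) (hbal : Balanced v)
    (hE : criticalExponent v = ((d - 1 : ℕ) : ℝ≥0∞) / ((d - 2 : ℕ) : ℝ≥0∞))
    {r Q : ℕ} (hQ : 0 < Q) (hr : ∀ j, v (r + j * Q) = v r) : False := by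
  choose ρ hρ using fun a => exists_freq hbal a
  have hb : v r ≠ v (r + 1) := by
    intro h
    have := rep_bound hd hE (i := r) (p := 1) (m := 1) one_pos (fun k hk => by
      have : k = 0 := by omega
      subst this
      simpa using h.symm)
    omega
  exact not_irrational hbal hb (hρ _) hQ hr (irrational_of_occurs hd hrec hbal hE hρ (r + 1))

/-- Balanced sequences satisfying the distance-`(d-1)` condition do not exist. -/
lemma no_pansiot [Fintype α] {v : ℕ → α} {d : ℕ} (hd : 11 ≤ d)
    (hcard : Fintype.card α = d)
    (hrec : Recurrent v) (hbal : Balanced v)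
    (hE : criticalExponent v = ((d - 1 : ℕ) : ℝ≥0∞) / ((d - 2 : ℕ) : ℝ≥0∞))
    (hinj : ∀ i p, 0 < p → v (i + p) = v i → d - 1 ≤ p) : False := by
  obtain ⟨D, rfl⟩ : ∃ D, d = D + 1 := ⟨d - 1, by omega⟩
  simp only [Nat.add_sub_cancel] at hinj
  have hD : 10 ≤ D := by omega
  -- uniqueness of the missing letter
  have huniq : ∀ n x y, (∀ k < D, v (n + k) ≠ x) → (∀ k < D, v (n + k) ≠ y) → x = y := by
    intro n x y hx hy
    by_contra hxy
    let S : Finset α := (Finset.range D).image fun k => v (n + k)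
    have hS : S.card = D := by
      rw [Finset.card_image_of_injOn, Finset.card_range]
      intro k hk l hl hkl
      simp only [Finset.coe_range, Set.mem_Iio] at hk hl
      simp only at hkl
      rcases lt_trichotomy k l with h | h | h
      · have := hinj (n + k) (l - k) (by omega) (by rw [hkl]; congr 1; omega)
        omega
      · exact h
      · have := hinj (n + l) (k - l) (by omega) (by rw [← hkl]; congr 1; omega)
        omega
    have hxS : x ∉ S := by
      simp only [S, Finset.mem_image, Finset.mem_range, not_exists, not_and]
      exact hx
    have hyS : y ∉ S := by
      simp only [S, Finset.mem_image, Finset.mem_range, not_exists, not_and]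
      exact hy
    have h1 : (insert x (insert y S)).card = D + 2 := by
      rw [Finset.card_insert_of_notMem, Finset.card_insert_of_notMem hyS, hS]
      simp [hxy, hxS]
    have h2 := Finset.card_le_univ (insert x (insert y S))
    omega
  -- `Z n` : the letter at `n` has gap `D`
  let Z : ℕ → Prop := fun n => v (n + D) = v n
  have rep2 : ∀ n p, 0 < p → p < 2 * (D - 1) → v (n + p) = v n →
      v (n + 1 + p) = v (n + 1) → False := by
    intro n p hp hp2 h0 h1
    have := rep_bound hd hE (i := n) (p := p) (m := 2) hp (fun k hk => by
      interval_cases k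
      · simpa using h0
      · exact h1)
    omega
  have no00 : ∀ n, Z n → ¬ Z (n + 1) := fun n h0 h1 =>
    rep2 n D (by omega) (by omega) h0 h1
  have G1 : ∀ n, ¬ Z n → ¬ Z (n + 1) → v (n + D + 1) = v n := by
    intro n h0 h1
    refine huniq (n + 1) _ _ ?_ ?_
    · intro k hk h
      by_cases hk0 : k = 0
      · subst hk0
        exact h1 (by show v (n + 1 + D) = v (n + 1); rw [add_right_comm]; exact h.symm)
      · have := hinj (n + 1 + k) (D - k) (by omega) (by rw [h]; congr 1; omega)
        omega
    · intro k hk h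
      have := hinj n (1 + k) (by omega) (by rw [← add_assoc]; exact h)
      have hk' : 1 + k = D := by omega
      apply h0
      show v (n + D) = v n
      rw [← hk', ← add_assoc]
      exact h
  have G2 : ∀ n, ¬ Z n → Z (n + 1) → v (n + D + 2) = v n := by
    intro n h0 h1
    have h2 := no00 _ h1
    have h1' : v (n + 1 + D) = v (n + 1) := h1
    refine huniq (n + 2) _ _ ?_ ?_
    · intro k hk h
      by_cases hk0 : k = 0
      · subst hk0
        exact h2 (by show v (n + 1 + 1 + D) = v (n + 1 + 1)
                     rw [show n + 1 + 1 + D = n + D + 2 by ring]; exact h.symm)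
      · have := hinj (n + 2 + k) (D - k) (by omega) (by rw [h]; congr 1; omega)
        omega
    · intro k hk h
      have := hinj n (2 + k) (by omega) (by rw [← add_assoc]; exact h)
      rcases (by omega : 2 + k = D ∨ 2 + k = D + 1) with hk' | hk'
      · apply h0
        show v (n + D) = v n
        rw [← hk', ← add_assoc]
        exact h
      · have e : n + 2 + k = n + 1 + D := by omega
        rw [e, h1'] at h
        have := hinj n 1 one_pos h
        omega
  have no111 : ∀ n, ¬ Z n → ¬ Z (n + 1) → ¬ Z (n + 2) → False := by
    intro n h0 h1 h2
    refine rep2 n (D + 1) (by omega) (by omega) (G1 n h0 h1) ?_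
    exact G1 (n + 1) h1 h2
  -- letters with a gap `D+2`
  let W : α → Prop := fun a => ∃ n, v n = a ∧ ¬ Z n ∧ Z (n + 1)
  have notboth : ∀ n, Z n → ¬ W (v n) := by
    rintro m hm ⟨n, hn, h0, h1⟩
    have c1 := two_le_cnt (v := v) (a := v m) (i := m) (p := D) (by omega) rfl hm
    have c2 : cnt v (v m) (n + 1) (D + 1) = 0 := by
      apply cnt_eq_zero
      intro k hk h
      rw [← hn] at h
      have := hinj n (1 + k) (by omega) (by rw [← add_assoc]; exact h)
      rcases (by omega : 1 + k = D ∨ 1 + k = D + 1) with hk' | hk'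
      · apply h0
        show v (n + D) = v n
        rw [← hk', ← add_assoc]
        exact h
      · have e : n + 1 + k = n + 1 + D := by omega
        have h1' : v (n + 1 + D) = v (n + 1) := h1
        rw [e, h1'] at h
        have := hinj n 1 one_pos h
        omega
    have := bal_cnt hbal (v m) m (n + 1) (D + 1)
    omega
  have WZ : ∀ n, Z (n + 1) → ¬ Z n := fun n h h' => no00 n h' h
  have Wof : ∀ n, Z (n + 1) → W (v n) := fun n h => ⟨n, rfl, WZ n h, h⟩
  have Zstep : ∀ n, Z n → ¬ Z (n + D) → ¬ Z (n + D + 1) := by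
    intro n h h0 h1
    exact notboth n h ⟨n + D, h, h0, h1⟩
  obtain ⟨n0, hn0⟩ : ∃ n, Z (n + 1) := by
    by_contra hc
    push Not at hc
    exact no111 1 (hc 0) (hc 1) (hc 2)
  obtain ⟨n, hn1, hn2⟩ : ∃ n, Z (n + 1) ∧ ¬ Z (n + D + 2 + 1) := by
    by_contra hc
    push Not at hc
    have hj : ∀ j, Z (n0 + j * (D + 2) + 1) ∧ v (n0 + j * (D + 2)) = v n0 := by
      intro j
      induction j with
      | zero => simpa using hn0
      | succ j ih =>
        have e : n0 + (j + 1) * (D + 2) = n0 + j * (D + 2) + D + 2 := by ring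
        rw [e]
        refine ⟨hc _ ih.1, ?_⟩
        rw [G2 _ (WZ _ ih.1) ih.1]
        exact ih.2
    exact no_AP hd hrec hbal hE (r := n0) (Q := D + 2) (by omega) (fun j => (hj j).2)
  -- the invariant pattern
  let Inv : ℕ → Prop := fun m =>
    Z (m + 1) ∧ ¬ Z (m + 2) ∧ ¬ Z (m + 3) ∧ Z (m + 4) ∧ W (v (m + 2))
  have hstart : Inv (n + D) := by
    have e1 : v (n + D + 2) = v n := G2 n (WZ n hn1) hn1
    have hW : W (v (n + D + 2)) := by rw [e1]; exact Wof n hn1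
    have h2 : ¬ Z (n + D + 2) := fun h => notboth _ h hW
    refine ⟨?_, h2, hn2, ?_, hW⟩
    · by_contra h
      exact no111 (n + D + 1) h h2 hn2
    · by_contra h
      exact no111 (n + D + 2) h2 hn2 h
  have hInv : ∀ m, Inv m → Inv (m + D) := by
    rintro m ⟨h1, h2, h3, h4, h5⟩
    have e1 : v (m + D + 3) = v (m + 2) := by
      have := G1 (m + 2) h2 h3
      rwa [show m + 2 + D + 1 = m + D + 3 by ring] at this
    have k3 : ¬ Z (m + D + 3) := by
      intro h
      apply notboth _ h
      rw [e1]
      exact h5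
    have k1 : Z (m + D + 1) := by
      by_contra h
      have := Zstep (m + 1) h1
      rw [show m + 1 + D = m + D + 1 by ring] at this
      exact no111 _ h (this h) k3
    have k4 : Z (m + D + 4) := by
      by_contra h
      have := Zstep (m + 4) h4
      rw [show m + 4 + D = m + D + 4 by ring] at this
      exact no111 _ k3 h (this h)
    refine ⟨k1, no00 _ k1, k3, k4, ?_⟩
    rw [G2 m (WZ m h1) h1]
    exact Wof m h1
  have hfin : ∀ j, Inv (n + D + j * D) ∧ v (n + D + 1 + j * D) = v (n + D + 1) := by
    intro j
    induction j with
    | zero => simpa using hstart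
    | succ j ih =>
      refine ⟨?_, ?_⟩
      · have e : n + D + (j + 1) * D = n + D + j * D + D := by ring
        rw [e]
        exact hInv _ ih.1
      · have h1 : v (n + D + j * D + 1 + D) = v (n + D + j * D + 1) := ih.1.1
        rw [show n + D + 1 + (j + 1) * D = n + D + j * D + 1 + D by ring, h1, ← ih.2]
        congr 1
        ring
  exact no_AP hd hrec hbal hE (r := n + D + 1) (Q := D) (by omega) (fun j => (hfin j).2)

end Helpers

theorem statement7 {α : Type*} [Fintype α] [DecidableEq α] (d : ℕ) (hd : 11 ≤ d)
    (hcard : Fintype.card α = d) (v : ℕ → α)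
    (hrec : Recurrent v) (hbal : Balanced v)
    (hE : criticalExponent v = ((d - 1 : ℕ) : ℝ≥0∞) / ((d - 2 : ℕ) : ℝ≥0∞)) :
    ∃ ρ : α → ℝ, (∀ a : α, HasFreq v a (ρ a)) ∧
      ∀ m : ℝ, IsGreatest (Set.range ρ) m →
        1 / ((d : ℝ) - 1) < m ∧ m < 1 / ((d : ℝ) - 2) := by
  choose ρ hρ using fun a => exists_freq hbal a
  have hirr := irrational_of_occurs hd hrec hbal hE hρ
  have hd' : (11 : ℝ) ≤ d := by exact_mod_cast hd
  refine ⟨ρ, hρ, fun m hm => ⟨?_, ?_⟩⟩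
  · by_contra hc
    push Not at hc
    refine no_pansiot hd hcard hrec hbal hE fun i p hp h => ?_
    by_contra hlt
    push Not at hlt
    have h1 := dev_le hbal (hρ (v i)) i (p + 1)
    have h2 : (2 : ℝ) ≤ cnt v (v i) i (p + 1) := by
      exact_mod_cast two_le_cnt hp rfl h
    have h3 : ρ (v i) ≤ 1 / ((d : ℝ) - 1) := (hm.2 ⟨v i, rfl⟩).trans hc
    have h4 : ((p + 1 : ℕ) : ℝ) ≤ (d : ℝ) - 1 := by
      have : p + 1 + 1 ≤ d := by omega
      have : ((p + 1 + 1 : ℕ) : ℝ) ≤ d := by exact_mod_cast this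
      push_cast at this ⊢
      linarith
    have h5 : 1 / ((d : ℝ) - 1) ≤ ρ (v i) := by
      rw [div_le_iff₀ (by linarith)]
      nlinarith [freq_nonneg (hρ (v i))]
    have h6 : ρ (v i) = 1 / ((d : ℝ) - 1) := le_antisymm h3 h5
    exact hirr i ⟨1 / ((d : ℚ) - 1), by rw [h6]; push_cast; rfl⟩
  · obtain ⟨a, rfl⟩ := hm.1
    have hw : ∀ i, cnt v a i (d - 2) ≤ 1 := by
      intro i
      by_contra hc
      push Not at hc
      obtain ⟨x, y, hxy, hy, h1, h2⟩ := cnt_two hc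
      have := rep_bound hd hE (i := i + x) (p := y - x) (m := 1) (by omega) (fun k hk => by
        have : k = 0 := by omega
        subst this
        rw [add_zero, h1, show i + x + (y - x) = i + y by omega, h2])
      omega
    have h1 := freq_le (hρ a) hw
    rw [Nat.cast_sub (by omega)] at h1
    push_cast at h1
    have h2 : ρ a ≤ 1 / ((d : ℝ) - 2) := by
      rw [le_div_iff₀ (by linarith)]
      linarith
    refine lt_of_le_of_ne h2 fun h => ?_
    by_cases ha : ∃ i, v i = a
    · obtain ⟨i, rfl⟩ := ha
      exact hirr i ⟨1 / ((d : ℚ) - 2), by rw [h]; push_cast; rfl⟩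
    · push Not at ha
      have h0 : ∀ i, cnt v a i 1 ≤ 0 := fun i => by simp [cnt_one, ha]
      have h3 := freq_le (hρ a) h0
      have h4 : 0 < 1 / ((d : ℝ) - 2) := by
        apply div_pos one_pos
        linarith
      push_cast at h3
      linarith

end BalancedCE
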